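/- arXiv:2512.13075 — 2 statements merged into one kernel-verified Lean document; each statement's English description precedes it below -/
import Mathlib

section
/- Let (X,d,f) be a TDS. Then for every α > 0, sup{ \underline{h}_μ^{BK}(f,α) : μ an f-invariant Borel probability measure on X } ≤ h_top^α(f,X), where \underline{h}_μ^{BK}(f,α) = ∫_X lim_{ε→0} liminf_{n→∞} (−log μ(B_n^α(x,ε)))/n dμ(x) is the lower α-local Brin–Katok entropy of μ. -/
open Filter Set MeasureTheory ENNReal
open scoped Classical NNReal

noncomputable section

namespace AlphaBS

variable {X : Type*}

/-- Birkhoff sum `S_n φ (x) = ∑_{j<n} φ(f^j x)`. -/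
def birk (f : X → X) (φ : X → ℝ) (n : ℕ) (x : X) : ℝ :=
  ∑ j ∈ Finset.range n, φ (f^[j] x)

/-- The α-Bowen ball `B_n^α(x,ε) = {y : d_n^α(x,y) < ε}`, where
`d_n^α(x,y) = max_{0 ≤ i ≤ n-1} e^{αi} d(f^i x, f^i y)`, w.r.t. an explicit distance `d`. -/
def bowenBall (d : X → X → ℝ) (f : X → X) (α : ℝ) (n : ℕ) (x : X) (ε : ℝ) : Set X :=
  {y | ∀ i < n, Real.exp (α * i) * d (f^[i] x) (f^[i] y) < ε}

section covers

variable (d : X → X → ℝ) (f : X → X)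

/-- `M^α(K,s,ε,n,φ)`: infimum over countable families of α-Bowen balls covering `K`. -/
def Mpre (φ : X → ℝ) (α s ε : ℝ) (N : ℕ) (K : Set X) : ℝ≥0∞ :=
  ⨅ (c : ℕ → X) (m : ℕ → ℕ) (I : Set ℕ) (_ : I.Nonempty) (_ : ∀ i ∈ I, N ≤ m i)
    (_ : K ⊆ ⋃ i ∈ I, bowenBall d f α (m i) (c i) ε),
    ∑' i : I, ENNReal.ofReal
      (Real.exp (-s * sSup (birk f φ (m i) '' bowenBall d f α (m i) (c i) ε)))

/-- `M^α(K,s,ε,φ) = lim_{n→∞} M^α(K,s,ε,n,φ)` (the quantity is nondecreasing in `n`). -/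
def Mlim (φ : X → ℝ) (α s ε : ℝ) (K : Set X) : ℝ≥0∞ := ⨆ N : ℕ, Mpre d f φ α s ε N K

/-- `M^α(K,ε,φ) = inf {s ≥ 0 : M^α(K,s,ε,φ) = 0}`. -/
def Mcrit (φ : X → ℝ) (α ε : ℝ) (K : Set X) : EReal :=
  ⨅ (s : ℝ) (_ : 0 ≤ s) (_ : Mlim d f φ α s ε K = 0), (s : EReal)

/-- The α-BS dimension `dim_BS^α(f,K,φ) = lim_{ε→0} M^α(K,ε,φ)`
(the quantity is nonincreasing in `ε`). -/
def dimBS (φ : X → ℝ) (α : ℝ) (K : Set X) : EReal :=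
  ⨆ (ε : ℝ) (_ : 0 < ε), Mcrit d f φ α ε K

/-- `M^{α,1}(K,s,ε,n,φ)`: the variant with weights `exp(-s·S_{n_i}φ(x_i))` at the centers. -/
def M1pre (φ : X → ℝ) (α s ε : ℝ) (N : ℕ) (K : Set X) : ℝ≥0∞ :=
  ⨅ (c : ℕ → X) (m : ℕ → ℕ) (I : Set ℕ) (_ : I.Nonempty) (_ : ∀ i ∈ I, N ≤ m i)
    (_ : K ⊆ ⋃ i ∈ I, bowenBall d f α (m i) (c i) ε),
    ∑' i : I, ENNReal.ofReal (Real.exp (-s * birk f φ (m i) (c i)))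

def M1lim (φ : X → ℝ) (α s ε : ℝ) (K : Set X) : ℝ≥0∞ := ⨆ N : ℕ, M1pre d f φ α s ε N K

def M1crit (φ : X → ℝ) (α ε : ℝ) (K : Set X) : EReal :=
  ⨅ (s : ℝ) (_ : 0 ≤ s) (_ : M1lim d f φ α s ε K = 0), (s : EReal)

/-- The modified α-BS dimension `\widetilde{dim}_{BS}^α(f,K,φ)`. -/
def dimBS1 (φ : X → ℝ) (α : ℝ) (K : Set X) : EReal :=
  ⨆ (ε : ℝ) (_ : 0 < ε), M1crit d f φ α ε K

/-- `M^α(K,s,ε,n,1)`: covering quantity with weights `exp(-s n_i)`. -/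
def Epre (α s ε : ℝ) (N : ℕ) (K : Set X) : ℝ≥0∞ :=
  ⨅ (c : ℕ → X) (m : ℕ → ℕ) (I : Set ℕ) (_ : I.Nonempty) (_ : ∀ i ∈ I, N ≤ m i)
    (_ : K ⊆ ⋃ i ∈ I, bowenBall d f α (m i) (c i) ε),
    ∑' i : I, ENNReal.ofReal (Real.exp (-s * (m i : ℝ)))

def Elim (α s ε : ℝ) (K : Set X) : ℝ≥0∞ := ⨆ N : ℕ, Epre d f α s ε N K

def Ecrit (α ε : ℝ) (K : Set X) : EReal :=
  ⨅ (s : ℝ) (_ : 0 ≤ s) (_ : Elim d f α s ε K = 0), (s : EReal)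

/-- The α-Bowen topological entropy `h_top^{α,B}(f,K)` (i.e. `dim_BS^α(f,K,1)`,
computed with weights `exp(-s n_i)`). -/
def entB (α : ℝ) (K : Set X) : EReal := ⨆ (ε : ℝ) (_ : 0 < ε), Ecrit d f α ε K

/-- `ℳ_B^α(K,s,ε,n,h)`: the Pesin pressure covering quantity. -/
def Ppre (h : X → ℝ) (α s ε : ℝ) (N : ℕ) (K : Set X) : ℝ≥0∞ :=
  ⨅ (c : ℕ → X) (m : ℕ → ℕ) (I : Set ℕ) (_ : I.Nonempty) (_ : ∀ i ∈ I, N ≤ m i)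
    (_ : K ⊆ ⋃ i ∈ I, bowenBall d f α (m i) (c i) ε),
    ∑' i : I, ENNReal.ofReal
      (Real.exp (-s * (m i : ℝ) + sSup (birk f h (m i) '' bowenBall d f α (m i) (c i) ε)))

def Plim (h : X → ℝ) (α s ε : ℝ) (K : Set X) : ℝ≥0∞ := ⨆ N : ℕ, Ppre d f h α s ε N K

/-- `ℳ_B^α(K,ε,h) = inf {s ∈ ℝ : ℳ_B^α(K,s,ε,h) = 0}`. -/
def Pcrit (h : X → ℝ) (α ε : ℝ) (K : Set X) : EReal :=
  ⨅ (s : ℝ) (_ : Plim d f h α s ε K = 0), (s : EReal)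

/-- The α-Pesin topological pressure `P_B^α(f,K,h)`. -/
def pressureB (h : X → ℝ) (α : ℝ) (K : Set X) : EReal :=
  ⨆ (ε : ℝ) (_ : 0 < ε), Pcrit d f h α ε K

/-- `W^α(K,s,ε,n,φ)`: the weighted covering quantity. -/
def Wpre (φ : X → ℝ) (α s ε : ℝ) (N : ℕ) (K : Set X) : ℝ≥0∞ :=
  ⨅ (c : ℕ → X) (m : ℕ → ℕ) (w : ℕ → ℝ) (I : Set ℕ) (_ : I.Nonempty)
    (_ : ∀ i ∈ I, N ≤ m i) (_ : ∀ i ∈ I, 0 < w i)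
    (_ : ∀ x ∈ K, (1 : ℝ≥0∞) ≤
      ∑' i : I, (bowenBall d f α (m i) (c i) ε).indicator
        (fun _ => ENNReal.ofReal (w i)) x),
    ∑' i : I, ENNReal.ofReal (w i * Real.exp (-s * birk f φ (m i) (c i)))

def Wlim (φ : X → ℝ) (α s ε : ℝ) (K : Set X) : ℝ≥0∞ := ⨆ N : ℕ, Wpre d f φ α s ε N K

def Wcrit (φ : X → ℝ) (α ε : ℝ) (K : Set X) : EReal :=
  ⨅ (s : ℝ) (_ : 0 ≤ s) (_ : Wlim d f φ α s ε K = 0), (s : EReal)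

/-- The weighted α-BS dimension `dim_BS^{α,W}(f,K,φ)`. -/
def dimBSW (φ : X → ℝ) (α : ℝ) (K : Set X) : EReal :=
  ⨆ (ε : ℝ) (_ : 0 < ε), Wcrit d f φ α ε K

/-- `r_n(f,α,X,ε)`: the smallest cardinality of an `(n,α,ε)`-spanning set of `X`. -/
def spanNum (α ε : ℝ) (n : ℕ) : ℕ :=
  sInf {m : ℕ | ∃ E : Finset X, E.card = m ∧
    ∀ x : X, ∃ y ∈ E, ∀ i < n, Real.exp (α * i) * d (f^[i] y) (f^[i] x) < ε}

/-- `h_top^α(f,X,ε) = limsup_n (1/n) log r_n(f,α,X,ε)`. -/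
def htopSpanE (α ε : ℝ) : EReal :=
  limsup (fun n : ℕ => ((Real.log (spanNum d f α ε n) / n : ℝ) : EReal)) atTop

/-- the α-topological entropy `h_top^α(f,X) = lim_{ε→0} h_top^α(f,X,ε)`
(the quantity is nonincreasing in `ε`). -/
def htopSpan (α : ℝ) : EReal := ⨆ (ε : ℝ) (_ : 0 < ε), htopSpanE d f α ε

/-- `r_n(X, e^{-nε})`: smallest number of ε-neutralized Bowen balls needed to cover `X`. -/
def neutNum (ε : ℝ) (n : ℕ) : ℕ :=
  sInf {m : ℕ | ∃ E : Finset X, E.card = m ∧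
    ∀ x : X, ∃ y ∈ E, ∀ j < n, d (f^[j] y) (f^[j] x) < Real.exp (-(n : ℝ) * ε)}

/-- the neutralized ε-topological entropy. -/
def neutEntE (ε : ℝ) : EReal :=
  limsup (fun n : ℕ => ((Real.log (neutNum d f ε n) / n : ℝ) : EReal)) atTop

/-- the neutralized topological entropy `\tilde h_top(f,X) = inf_{ε>0} \tilde h_top(f,X,ε)`. -/
def neutEnt : EReal := ⨅ (ε : ℝ) (_ : 0 < ε), neutEntE d f ε

end covers

/-- `-log t`, valued in `[0,∞]` for `t ∈ [0,1]`, with `-log 0 = ∞`. -/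
def negLog (t : ℝ≥0∞) : ℝ≥0∞ := if t = 0 then ⊤ else ENNReal.ofReal (-Real.log t.toReal)

section measure

variable [MeasurableSpace X]

/-- `P_μ^α(f,x,φ) = lim_{ε→0} liminf_n (-log μ(B_n^α(x,ε)))/S_nφ(x)`. -/
def localBKphi (d : X → X → ℝ) (f : X → X) (φ : X → ℝ) (α : ℝ) (μ : Measure X)
    (x : X) : ℝ≥0∞ :=
  ⨆ (ε : ℝ) (_ : 0 < ε),
    liminf (fun n : ℕ =>
      negLog (μ (bowenBall d f α n x ε)) / ENNReal.ofReal (birk f φ n x)) atTop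

/-- The α-local Brin–Katok entropy `P_μ^α(f,φ) = ∫ P_μ^α(f,x,φ) dμ(x)`. -/
def BKphi (d : X → X → ℝ) (f : X → X) (φ : X → ℝ) (α : ℝ) (μ : Measure X) : ℝ≥0∞ :=
  ∫⁻ x, localBKphi d f φ α μ x ∂μ

/-- `lim_{ε→0} liminf_n (-log μ(B_n^α(x,ε)))/n`. -/
def localBKn (d : X → X → ℝ) (f : X → X) (α : ℝ) (μ : Measure X) (x : X) : ℝ≥0∞ :=
  ⨆ (ε : ℝ) (_ : 0 < ε),
    liminf (fun n : ℕ => negLog (μ (bowenBall d f α n x ε)) / (n : ℝ≥0∞)) atTop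

/-- The lower α-local Brin–Katok entropy `\underline h_μ^{BK}(f,α)`. -/
def BKn (d : X → X → ℝ) (f : X → X) (α : ℝ) (μ : Measure X) : ℝ≥0∞ :=
  ∫⁻ x, localBKn d f α μ x ∂μ

end measure

/-- diameter of a set w.r.t. an explicit distance. -/
def ediamD (d : X → X → ℝ) (U : Set X) : ℝ≥0∞ :=
  ⨆ (x ∈ U) (y ∈ U), ENNReal.ofReal (d x y)

/-- pre-Hausdorff measure at scale `δ`. -/
def hausPre (d : X → X → ℝ) (s δ : ℝ) (E : Set X) : ℝ≥0∞ :=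
  ⨅ (U : ℕ → Set X) (_ : E ⊆ ⋃ i, U i) (_ : ∀ i, ediamD d (U i) ≤ ENNReal.ofReal δ),
    ∑' i, ediamD d (U i) ^ s

/-- `s`-dimensional Hausdorff measure w.r.t. an explicit distance. -/
def hausMeas (d : X → X → ℝ) (s : ℝ) (E : Set X) : ℝ≥0∞ :=
  ⨆ (δ : ℝ) (_ : 0 < δ), hausPre d s δ E

/-- Hausdorff dimension w.r.t. an explicit distance:
`dim_H(E,d) = inf {s ≥ 0 : H^s(E) = 0}`. -/
def hausDim (d : X → X → ℝ) (E : Set X) : ℝ≥0∞ :=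
  ⨅ (s : ℝ≥0) (_ : hausMeas d s E = 0), (s : ℝ≥0∞)

/-- The left shift on `Σ_k^+ = {0,…,k-1}^ℕ`. -/
def shiftMap (k : ℕ) : (ℕ → Fin k) → (ℕ → Fin k) := fun x n => x (n + 1)

/-- The metric `d(x,y) = e^{-n(x,y)}` on `Σ_k^+`, where `n(x,y)` is the least index
at which `x` and `y` differ, and `d(x,x) = 0`. -/
def shiftDist {k : ℕ} (x y : ℕ → Fin k) : ℝ :=
  if x = y then 0 else Real.exp (-((sInf {n : ℕ | x n ≠ y n} : ℕ) : ℝ))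

/-- The subshift of finite type `Σ_A^+` determined by the incidence matrix `A`. -/
def SFT {k : ℕ} (A : Matrix (Fin k) (Fin k) ℝ) : Type :=
  {x : ℕ → Fin k // ∀ n, A (x n) (x (n + 1)) = 1}

/-- The left shift restricted to `Σ_A^+`. -/
def sftShift {k : ℕ} (A : Matrix (Fin k) (Fin k) ℝ) : SFT A → SFT A :=
  fun x => ⟨fun n => x.1 (n + 1), fun n => x.2 (n + 1)⟩

/-- The metric `d` restricted to `Σ_A^+`. -/
def sftDist {k : ℕ} (A : Matrix (Fin k) (Fin k) ℝ) : SFT A → SFT A → ℝ :=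
  fun x y => shiftDist x.1 y.1

end AlphaBS

open AlphaBS

/-!
Let `E` be a minimal `(n, α, ε)`-spanning set. Every point `x` with `μ (B_n^α(x, 2ε)) < t` lies in
some `B_n^α(y, ε)` with `y ∈ E`, and `B_n^α(y, ε) ⊆ B_n^α(x, 2ε)` then has measure less than `t`;
so such points form a set of measure at most `r_n(f, α, X, ε) t`. For `t = e^{-nb}` with
`b > h_top^α(f, X, ε)` these bounds are summable in `n`, and by Borel–Cantelli almost every `x`
satisfies `μ (B_n^α(x, 2ε)) ≥ e^{-nb}` for all large `n`. Hence the lower local entropy is at most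
`h_top^α(f, X)` almost everywhere, and the bound survives integration against a probability measure.
-/

namespace AlphaBS

variable {X : Type*}

section Bowen

variable {d : X → X → ℝ} {f : X → X} {α ε ε₁ ε₂ : ℝ} {n : ℕ} {x y : X}

lemma bowenBall_subset_bowenBall (h : ε₁ ≤ ε₂) :
    bowenBall d f α n x ε₁ ⊆ bowenBall d f α n x ε₂ :=
  fun _ hy i hi ↦ (hy i hi).trans_le h

lemma spanNum_eventually_le_exp {a : ℝ} (h : htopSpanE d f α ε < a) :
    ∀ᶠ n : ℕ in atTop, (spanNum d f α ε n : ℝ) ≤ Real.exp (n * a) := by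
  filter_upwards [eventually_lt_of_limsup_lt h, eventually_gt_atTop 0] with n hlog hn
  have hlog' : Real.log (spanNum d f α ε n) / n < a := EReal.coe_lt_coe_iff.1 hlog
  rw [div_lt_iff₀ (Nat.cast_pos.2 hn), mul_comm] at hlog'
  exact (Real.le_exp_log _).trans (Real.exp_le_exp.2 hlog'.le)

lemma htopSpanE_le_htopSpan (hε : 0 < ε) : htopSpanE d f α ε ≤ htopSpan d f α :=
  le_iSup₂ (f := fun (ε : ℝ) (_ : 0 < ε) ↦ htopSpanE d f α ε) ε hε

lemma htopSpan_nonneg : 0 ≤ htopSpan d f α := by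
  refine le_trans ?_ (htopSpanE_le_htopSpan one_pos)
  refine le_limsup_of_frequently_le' (Frequently.of_forall fun n ↦ ?_)
  exact EReal.coe_nonneg.2 (div_nonneg (Real.log_natCast_nonneg _) n.cast_nonneg)

variable [PseudoMetricSpace X]

lemma mem_bowenBall_self (hε : 0 < ε) : x ∈ bowenBall dist f α n x ε :=
  fun i _ ↦ by simpa only [dist_self, mul_zero] using hε

lemma bowenBall_subset_of_mem_bowenBall (hx : x ∈ bowenBall dist f α n y ε₁) :
    bowenBall dist f α n y ε₂ ⊆ bowenBall dist f α n x (ε₁ + ε₂) := by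
  intro z hz i hi
  calc Real.exp (α * i) * dist (f^[i] x) (f^[i] z)
      ≤ Real.exp (α * i) * (dist (f^[i] y) (f^[i] x) + dist (f^[i] y) (f^[i] z)) := by
        gcongr
        exact dist_triangle_left _ _ _
    _ < ε₁ + ε₂ := by
        rw [mul_add]
        exact add_lt_add (hx i hi) (hz i hi)

lemma isOpen_bowenBall (hf : Continuous f) : IsOpen (bowenBall dist f α n x ε) := by
  simp only [bowenBall, ofPred_forall]
  refine (finite_lt_nat n).isOpen_biInter fun i _ ↦ ?_
  exact isOpen_lt (continuous_const.mul (continuous_const.dist (hf.iterate i))) continuous_const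

lemma exists_card_eq_spanNum [CompactSpace X] (hf : Continuous f) (α : ℝ) (hε : 0 < ε) (n : ℕ) :
    ∃ E : Finset X, E.card = spanNum dist f α ε n ∧ ∀ x, ∃ y ∈ E, x ∈ bowenBall dist f α n y ε := by
  obtain ⟨E, hE⟩ := CompactSpace.elim_nhds_subcover (fun y ↦ bowenBall dist f α n y ε)
    fun y ↦ (isOpen_bowenBall hf).mem_nhds (mem_bowenBall_self hε)
  have hspan : ∀ x, ∃ y ∈ E, x ∈ bowenBall dist f α n y ε := fun x ↦ by
    simpa only [mem_iUnion, exists_prop] using hE.ge (mem_univ x)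
  exact Nat.sInf_mem (s := {m | ∃ E : Finset X, E.card = m ∧
    ∀ x, ∃ y ∈ E, x ∈ bowenBall dist f α n y ε}) ⟨E.card, E, rfl, hspan⟩

end Bowen

section NegLog

lemma negLog_antitone : Antitone negLog := by
  intro s t hst
  rcases eq_or_ne s 0 with rfl | hs
  · simp [negLog]
  rcases eq_or_ne t ⊤ with rfl | ht
  · simp [negLog]
  have hs_top : s ≠ ⊤ := ne_top_of_le_ne_top ht hst
  rw [negLog, negLog, if_neg hs, if_neg ((pos_iff_ne_zero.2 hs).trans_le hst).ne']
  gcongr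
  exact toReal_pos hs hs_top

lemma negLog_ofReal_exp_neg (r : ℝ) :
    negLog (ENNReal.ofReal (Real.exp (-r))) = ENNReal.ofReal r := by
  have hne : ENNReal.ofReal (Real.exp (-r)) ≠ 0 := (ofReal_pos.2 (Real.exp_pos _)).ne'
  rw [negLog, if_neg hne, toReal_ofReal (Real.exp_pos _).le, Real.log_exp, neg_neg]

lemma negLog_div_le_of_exp_neg_mul_le {t : ℝ≥0∞} {n : ℕ} {b : ℝ}
    (h : ENNReal.ofReal (Real.exp (-(n * b))) ≤ t) :
    negLog t / n ≤ ENNReal.ofReal b := by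
  refine div_le_of_le_mul' ?_
  calc negLog t ≤ ENNReal.ofReal (n * b) := negLog_ofReal_exp_neg _ ▸ negLog_antitone h
    _ = n * ENNReal.ofReal b := by rw [ofReal_mul n.cast_nonneg, ofReal_natCast]

end NegLog

section Measure

variable [MeasurableSpace X] {μ : Measure X}

lemma ae_eventually_notMem_of_eventually_le {s : ℕ → Set X} {u : ℕ → ℝ≥0∞}
    (hu : ∑' n, u n ≠ ∞) (h : ∀ᶠ n in atTop, μ (s n) ≤ u n) :
    ∀ᵐ x ∂μ, ∀ᶠ n in atTop, x ∉ s n := by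
  obtain ⟨N, hN⟩ := eventually_atTop.1 h
  have htail : ∑' n, μ (s (n + N)) ≠ ∞ := by
    refine ne_top_of_le_ne_top hu ?_
    calc ∑' n, μ (s (n + N)) ≤ ∑' n, u (n + N) :=
          ENNReal.tsum_le_tsum fun n ↦ hN _ (Nat.le_add_left N n)
      _ ≤ ∑' n, u n := ENNReal.tsum_comp_le_tsum_of_injective (add_left_injective N) u
  filter_upwards [ae_eventually_notMem htail] with x hx
  rwa [← map_add_atTop_eq_nat N, eventually_map]

/-- The lower `α`-local Brin–Katok entropy of `μ` at the point `x` and the fixed scale `ε`; its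
limit as `ε → 0` is `localBKn`. -/
def localBKnE (d : X → X → ℝ) (f : X → X) (α : ℝ) (μ : Measure X) (ε : ℝ) (x : X) : ℝ≥0∞ :=
  liminf (fun n : ℕ ↦ negLog (μ (bowenBall d f α n x ε)) / (n : ℝ≥0∞)) atTop

variable {d : X → X → ℝ} {f : X → X} {α ε : ℝ}

lemma localBKnE_antitone (x : X) : Antitone fun ε ↦ localBKnE d f α μ ε x := by
  refine fun ε₁ ε₂ h ↦ liminf_le_liminf (Eventually.of_forall fun n ↦ ?_)
  gcongr ?_ / _
  exact negLog_antitone (measure_mono (bowenBall_subset_bowenBall h))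

lemma localBKn_le_of_forall_nat {x : X} {c : ℝ≥0∞}
    (h : ∀ k : ℕ, localBKnE d f α μ (1 / (k + 1)) x ≤ c) : localBKn d f α μ x ≤ c := by
  refine iSup₂_le fun ε hε ↦ ?_
  obtain ⟨k, hk⟩ := exists_nat_one_div_lt hε
  exact (localBKnE_antitone x hk.le).trans (h k)

variable [PseudoMetricSpace X] [CompactSpace X]

lemma measure_setOf_measure_bowenBall_lt_le (hf : Continuous f) (hε : 0 < ε) (n : ℕ) (t : ℝ≥0∞) :
    μ {x | μ (bowenBall dist f α n x (2 * ε)) < t} ≤ spanNum dist f α ε n * t := by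
  set S := {x | μ (bowenBall dist f α n x (2 * ε)) < t}
  obtain ⟨E, hcard, hspan⟩ := exists_card_eq_spanNum hf α hε n
  have hcover : S ⊆ ⋃ y ∈ E, S ∩ bowenBall dist f α n y ε := fun x hx ↦ by
    obtain ⟨y, hy, hxy⟩ := hspan x
    exact mem_biUnion hy ⟨hx, hxy⟩
  have hpiece : ∀ y, μ (S ∩ bowenBall dist f α n y ε) ≤ t := fun y ↦ by
    rcases (S ∩ bowenBall dist f α n y ε).eq_empty_or_nonempty with hempty | ⟨x, hxS, hxy⟩
    · simp [hempty]
    · have hsub := two_mul ε ▸ bowenBall_subset_of_mem_bowenBall (ε₂ := ε) hxy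
      exact (measure_mono (inter_subset_right.trans hsub)).trans hxS.le
  calc μ S ≤ ∑ y ∈ E, μ (S ∩ bowenBall dist f α n y ε) :=
        (measure_mono hcover).trans (measure_biUnion_finset_le _ _)
    _ ≤ E.card • t := Finset.sum_le_card_nsmul _ _ _ fun y _ ↦ hpiece y
    _ = spanNum dist f α ε n * t := by rw [hcard, nsmul_eq_mul]

lemma ae_eventually_exp_neg_mul_le_measure_bowenBall (hf : Continuous f) (hε : 0 < ε) {b : ℝ}
    (h : htopSpanE dist f α ε < b) (μ : Measure X) :
    ∀ᵐ x ∂μ, ∀ᶠ n : ℕ in atTop,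
      ENNReal.ofReal (Real.exp (-(n * b))) ≤ μ (bowenBall dist f α n x (2 * ε)) := by
  obtain ⟨a, ha, hab⟩ := EReal.lt_iff_exists_real_btwn.1 h
  have hratio : ENNReal.ofReal (Real.exp (a - b)) < 1 := by
    rw [ofReal_lt_one, Real.exp_lt_one_iff, sub_neg]
    exact EReal.coe_lt_coe_iff.1 hab
  have hsmall : ∀ᶠ n : ℕ in atTop,
      μ {x | μ (bowenBall dist f α n x (2 * ε)) < ENNReal.ofReal (Real.exp (-(n * b)))} ≤
        ENNReal.ofReal (Real.exp (a - b)) ^ n := by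
    filter_upwards [spanNum_eventually_le_exp ha] with n hn
    refine (measure_setOf_measure_bowenBall_lt_le hf hε n _).trans ?_
    rw [← ofReal_natCast, ← ofReal_mul (Nat.cast_nonneg _), ← ofReal_pow (Real.exp_pos _).le]
    refine ofReal_le_ofReal ?_
    calc (spanNum dist f α ε n : ℝ) * Real.exp (-(n * b))
        ≤ Real.exp (n * a) * Real.exp (-(n * b)) := by gcongr
      _ = Real.exp (a - b) ^ n := by rw [← Real.exp_add, ← Real.exp_nat_mul]; ring_nf
  filter_upwards [ae_eventually_notMem_of_eventually_le (tsum_geometric_lt_top.2 hratio).ne hsmall]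
    with x hx
  exact hx.mono fun n hn ↦ not_lt.1 hn

lemma ae_localBKnE_le_ofReal (hf : Continuous f) (hε : 0 < ε) {b : ℝ}
    (h : htopSpanE dist f α ε < b) (μ : Measure X) :
    ∀ᵐ x ∂μ, localBKnE dist f α μ (2 * ε) x ≤ ENNReal.ofReal b := by
  filter_upwards [ae_eventually_exp_neg_mul_le_measure_bowenBall hf hε h μ] with x hx
  exact liminf_le_of_frequently_le' (hx.mono fun n ↦ negLog_div_le_of_exp_neg_mul_le).frequently

lemma ae_localBKnE_le_toENNReal_htopSpanE (hf : Continuous f) (α : ℝ) (hε : 0 < ε)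
    (μ : Measure X) :
    ∀ᵐ x ∂μ, localBKnE dist f α μ (2 * ε) x ≤ (htopSpanE dist f α ε).toENNReal := by
  refine (ae_le_const_iff_forall_gt_measure_zero _ _).2 fun c hc ↦ ?_
  obtain ⟨b, hb, hbc⟩ := lt_iff_exists_nnreal_btwn.1 hc
  have hlt : htopSpanE dist f α ε < (b : ℝ) := by
    contrapose! hb
    simpa using EReal.toENNReal_le_toENNReal hb
  have hae : ∀ᵐ x ∂μ, localBKnE dist f α μ (2 * ε) x < c := by
    filter_upwards [ae_localBKnE_le_ofReal hf hε hlt μ] with x hx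
    exact (hx.trans_eq ofReal_coe_nnreal).trans_lt hbc
  simpa only [ae_iff, not_lt] using hae

theorem ae_localBKn_le_toENNReal_htopSpan (hf : Continuous f) (α : ℝ) (μ : Measure X) :
    ∀ᵐ x ∂μ, localBKn dist f α μ x ≤ (htopSpan dist f α).toENNReal := by
  have hscale (k : ℕ) : ∀ᵐ x ∂μ,
      localBKnE dist f α μ (1 / (k + 1)) x ≤ (htopSpan dist f α).toENNReal := by
    have hε : (0 : ℝ) < 1 / (k + 1) / 2 := by positivity
    filter_upwards [ae_localBKnE_le_toENNReal_htopSpanE hf α hε μ] with x hx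
    rw [mul_div_cancel₀ _ two_ne_zero] at hx
    exact hx.trans (EReal.toENNReal_le_toENNReal (htopSpanE_le_htopSpan hε))
  filter_upwards [ae_all_iff.2 hscale] with x hx
  exact localBKn_le_of_forall_nat hx

theorem BKn_le_toENNReal_htopSpan (hf : Continuous f) (α : ℝ) (μ : Measure X)
    [IsProbabilityMeasure μ] : BKn dist f α μ ≤ (htopSpan dist f α).toENNReal :=
  lintegral_le_const (ae_localBKn_le_toENNReal_htopSpan hf α μ)

end Measure

end AlphaBS

theorem stmt13_general {X : Type*} [PseudoMetricSpace X] [CompactSpace X] [MeasurableSpace X]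
    {f : X → X} (hf : Continuous f) (α : ℝ) :
    ((⨆ (μ : Measure X) (_ : IsProbabilityMeasure μ), BKn dist f α μ : ℝ≥0∞) : EReal) ≤
      htopSpan dist f α := by
  rw [← EReal.coe_toENNReal (htopSpan_nonneg (d := dist) (f := f) (α := α)),
    EReal.coe_ennreal_le_coe_ennreal_iff]
  exact iSup₂_le fun μ _ ↦ BKn_le_toENNReal_htopSpan hf α μ

/-- `sup_μ \underline h_μ^{BK}(f,α) ≤ h_top^α(f,X)` over `f`-invariant
Borel probability measures `μ`. -/
theorem stmt13 {X : Type*} [MetricSpace X] [CompactSpace X]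
    [MeasurableSpace X] [BorelSpace X]
    (f : X → X) (hf : Continuous f) (α : ℝ) (hα : 0 < α) :
    ((⨆ (μ : Measure X) (_ : IsProbabilityMeasure μ)
        (_ : ∀ s : Set X, MeasurableSet s → μ (f ⁻¹' s) = μ s),
        BKn dist f α μ : ℝ≥0∞) : EReal) ≤ htopSpan dist f α := by
  refine (EReal.coe_ennreal_le_coe_ennreal_iff.2 ?_).trans (stmt13_general hf α)
  exact iSup₂_mono fun μ _ ↦ iSup_const_le

end
end

section
/- Let (Σ_k^+, d, σ) be the full one-sided shift on k symbols. Then for every α ≥ 0, h_top^{α,B}(σ, Σ_k^+) = h_top^α(σ, Σ_k^+) = (1+α)·log k, and the Hausdorff dimension satisfies dim_H(Σ_k^+, d) = log k. -/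
open Filter Set MeasureTheory ENNReal
open scoped Classical NNReal

noncomputable section

open AlphaBS

/-!
A point of `B_n^α(x, e⁻¹)` agrees with `x` on the window `[i, i + αi]` for every `i < n`, and
these windows fill `[0, (1 + α)n]` up to a bounded error. Hence α-Bowen balls of order `n` are
cylinders of length `(1 + α)n + O(1)`, and sets of diameter `e⁻ⁿ` lie in cylinders of length `n`.
Counting cylinders bounds the spanning numbers and the covers in the Hausdorff measure from above.
The uniform Bernoulli measure gives mass `k⁻ⁿ` to each cylinder of length `n`, so the mass
distribution principle bounds the Bowen entropy and the Hausdorff dimension from below. The bounds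
for the two entropies meet because Bowen entropy never exceeds the entropy by spanning sets.
-/

namespace AlphaBS

open PiNat ProbabilityTheory
open scoped Topology

section Exponentials

theorem tendsto_const_mul_ofReal_exp_mul {C : ℝ≥0∞} (hC : C ≠ ∞) {b : ℝ} (hb : b < 0) :
    Tendsto (fun n : ℕ => C * ENNReal.ofReal (Real.exp (b * n))) atTop (𝓝 0) := by
  have hexp : Tendsto (fun n : ℕ => Real.exp (b * n)) atTop (𝓝 0) :=
    Real.tendsto_exp_atBot.comp (tendsto_natCast_atTop_atTop.const_mul_atTop_of_neg hb)
  simpa using ENNReal.Tendsto.const_mul (ENNReal.tendsto_ofReal hexp) (Or.inr hC)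

theorem eventually_exp_neg_natCast_lt {ε : ℝ} (hε : 0 < ε) :
    ∀ᶠ n : ℕ in atTop, Real.exp (-(n : ℝ)) < ε :=
  (Real.tendsto_exp_neg_atTop_nhds_zero.comp tendsto_natCast_atTop_atTop).eventually_lt_const hε

theorem pow_eq_exp_log_mul {a : ℝ} (ha : 0 < a) (n : ℕ) : a ^ n = Real.exp (Real.log a * n) := by
  rw [← Real.rpow_natCast, Real.rpow_def_of_pos ha]

end Exponentials

section Entropy

variable {X : Type*} {d : X → X → ℝ} {f : X → X} {α ε : ℝ}

theorem Epre_le_tsum {ι : Type*} [Countable ι] [Nonempty ι] {s : ℝ} {N : ℕ} {K : Set X}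
    (c : ι → X) (m : ι → ℕ) (hm : ∀ i, N ≤ m i)
    (hK : K ⊆ ⋃ i, bowenBall d f α (m i) (c i) ε) :
    Epre d f α s ε N K ≤ ∑' i, ENNReal.ofReal (Real.exp (-s * m i)) := by
  obtain ⟨e, he⟩ := exists_injective_nat ι
  let c' := Function.extend e c fun _ => c (Classical.arbitrary ι)
  let m' := Function.extend e m 0
  have hc' : ∀ i, c' (e i) = c i := he.extend_apply _ _
  have hm' : ∀ i, m' (e i) = m i := he.extend_apply _ _
  refine iInf_le_of_le c' <| iInf_le_of_le m' <| iInf_le_of_le (range e) <|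
    iInf_le_of_le (range_nonempty e) <| iInf_le_of_le ?_ <| iInf_le_of_le ?_ ?_
  · rintro _ ⟨i, rfl⟩
    exact (hm i).trans_eq (hm' i).symm
  · simpa only [biUnion_range, hc', hm'] using hK
  · rw [tsum_range (fun j => ENNReal.ofReal (Real.exp (-s * m' j))) he]
    simp only [hm', le_refl]

theorem measure_div_le_Epre [MeasurableSpace X] {μ : Measure X} {C : ℝ≥0∞} {s : ℝ}
    (hμ : ∀ n x, μ (bowenBall d f α n x ε) ≤ C * ENNReal.ofReal (Real.exp (-s * n)))
    (N : ℕ) (K : Set X) : μ K / C ≤ Epre d f α s ε N K := by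
  refine le_iInf fun c => le_iInf fun m => le_iInf fun I => le_iInf fun _ => le_iInf fun _ =>
    le_iInf fun hcover => ENNReal.div_le_of_le_mul' ?_
  calc μ K ≤ μ (⋃ i ∈ I, bowenBall d f α (m i) (c i) ε) := measure_mono hcover
    _ ≤ ∑' i : I, μ (bowenBall d f α (m i) (c i) ε) := measure_biUnion_le μ I.to_countable _
    _ ≤ ∑' i : I, C * ENNReal.ofReal (Real.exp (-s * m i)) := ENNReal.tsum_le_tsum fun i => hμ _ _
    _ = C * ∑' i : I, ENNReal.ofReal (Real.exp (-s * m i)) := ENNReal.tsum_mul_left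

theorem le_Ecrit_of_measure_bowenBall_le [MeasurableSpace X] {μ : Measure X} {C : ℝ≥0∞}
    (hC : C ≠ ∞) {h : ℝ} {K : Set X} (hK : μ K ≠ 0)
    (hμ : ∀ n x, μ (bowenBall d f α n x ε) ≤ C * ENNReal.ofReal (Real.exp (-h * n))) :
    (h : EReal) ≤ Ecrit d f α ε K := by
  refine le_iInf fun s => le_iInf fun _ => le_iInf fun hs => ?_
  by_contra! hlt
  have hsh : s ≤ h := by exact_mod_cast hlt.le
  have hdiv : μ K / C ≤ Elim d f α s ε K := by
    refine (measure_div_le_Epre (fun n x => (hμ n x).trans ?_) 0 K).trans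
      (le_iSup (fun N => Epre d f α s ε N K) 0)
    gcongr
  rw [hs, nonpos_iff_eq_zero, ENNReal.div_eq_zero_iff] at hdiv
  exact hdiv.elim hK hC

variable (d f α ε) in
/-- `E` is an `(n,α,ε)`-spanning set of the whole space; `spanNum d f α ε n` is the least
cardinality of such a set. -/
def IsSpanning (n : ℕ) (E : Finset X) : Prop :=
  ∀ x, ∃ y ∈ E, x ∈ bowenBall d f α n y ε

theorem IsSpanning.nonempty [Nonempty X] {n : ℕ} {E : Finset X} (hE : IsSpanning d f α ε n E) :
    E.Nonempty :=
  let ⟨y, hy, _⟩ := hE (Classical.arbitrary X)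
  ⟨y, hy⟩

theorem IsSpanning.spanNum_le {n : ℕ} {E : Finset X} (hE : IsSpanning d f α ε n E) :
    spanNum d f α ε n ≤ E.card :=
  Nat.sInf_le ⟨E, rfl, hE⟩

theorem IsSpanning.exists_card_eq_spanNum {n : ℕ} {E : Finset X} (hE : IsSpanning d f α ε n E) :
    ∃ F, IsSpanning d f α ε n F ∧ F.card = spanNum d f α ε n :=
  let ⟨F, hcard, hF⟩ := Nat.sInf_mem (s := {m | ∃ E : Finset X, E.card = m ∧
    IsSpanning d f α ε n E}) ⟨_, E, rfl, hE⟩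
  ⟨F, hF, hcard⟩

theorem IsSpanning.Epre_univ_le [Nonempty X] {s : ℝ} {n N : ℕ} {E : Finset X}
    (hE : IsSpanning d f α ε n E) (hn : N ≤ n) :
    Epre d f α s ε N univ ≤ E.card * ENNReal.ofReal (Real.exp (-s * n)) := by
  have := hE.nonempty.to_subtype
  refine (Epre_le_tsum (fun y : E => (y : X)) (fun _ => n) (fun _ => hn) fun x _ => ?_).trans_eq ?_
  · obtain ⟨y, hy, hxy⟩ := hE x
    exact mem_iUnion.2 ⟨⟨y, hy⟩, hxy⟩
  · simp

theorem htopSpanE_nonneg : 0 ≤ htopSpanE d f α ε :=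
  le_limsup_of_frequently_le (Frequently.of_forall fun n => EReal.coe_nonneg.2 <|
    div_nonneg (Real.log_natCast_nonneg _) n.cast_nonneg)

theorem eventually_spanNum_le_exp {t : ℝ} (ht : htopSpanE d f α ε < t) :
    ∀ᶠ n : ℕ in atTop, (spanNum d f α ε n : ℝ) ≤ Real.exp (t * n) := by
  filter_upwards [eventually_lt_of_limsup_lt ht, eventually_gt_atTop 0] with n hlt hn
  have hlog : Real.log (spanNum d f α ε n) ≤ t * n :=
    ((div_lt_iff₀ (Nat.cast_pos.2 hn)).1 (EReal.coe_lt_coe_iff.1 hlt)).le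
  exact (Real.le_exp_log _).trans (Real.exp_le_exp.2 hlog)

theorem Ecrit_univ_le_htopSpanE [Nonempty X] (hfin : ∀ n, ∃ E, IsSpanning d f α ε n E) :
    Ecrit d f α ε univ ≤ htopSpanE d f α ε := by
  refine EReal.le_of_forall_lt_iff_le.1 fun s hs => ?_
  obtain ⟨t, ht, hts⟩ := EReal.lt_iff_exists_real_btwn.1 hs
  have hs₀ : 0 ≤ s := EReal.coe_nonneg.1 (htopSpanE_nonneg.trans hs.le)
  refine iInf_le_of_le s <| iInf₂_le_of_le hs₀ (ENNReal.iSup_eq_zero.2 fun N => ?_) le_rfl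
  have hlim : Tendsto (fun n : ℕ => 1 * ENNReal.ofReal (Real.exp ((t - s) * n))) atTop (𝓝 0) :=
    tendsto_const_mul_ofReal_exp_mul ENNReal.one_ne_top (sub_neg.2 (EReal.coe_lt_coe_iff.1 hts))
  refine nonpos_iff_eq_zero.1 (ge_of_tendsto hlim ?_)
  filter_upwards [eventually_spanNum_le_exp ht, eventually_ge_atTop N] with n hspan hn
  obtain ⟨E, hE⟩ := hfin n
  obtain ⟨F, hF, hcard⟩ := hE.exists_card_eq_spanNum
  calc Epre d f α s ε N univ
      ≤ F.card * ENNReal.ofReal (Real.exp (-s * n)) := hF.Epre_univ_le hn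
    _ = ENNReal.ofReal (spanNum d f α ε n) * ENNReal.ofReal (Real.exp (-s * n)) := by
        rw [hcard, ENNReal.ofReal_natCast]
    _ ≤ ENNReal.ofReal (Real.exp (t * n)) * ENNReal.ofReal (Real.exp (-s * n)) := by gcongr
    _ = 1 * ENNReal.ofReal (Real.exp ((t - s) * n)) := by
        rw [← ENNReal.ofReal_mul (Real.exp_nonneg _), ← Real.exp_add, one_mul]
        ring_nf

theorem htopSpanE_le_of_card_le [Nonempty X] {C h : ℝ}
    (hcard : ∀ n : ℕ, ∃ E, IsSpanning d f α ε n E ∧ (E.card : ℝ) ≤ C * Real.exp (h * n)) :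
    htopSpanE d f α ε ≤ h := by
  have hlim : Tendsto (fun n : ℕ => Real.log C / n + h) atTop (𝓝 h) := by
    simpa using (tendsto_const_div_atTop_nhds_zero_nat (Real.log C)).add_const h
  rw [← ((continuous_coe_real_ereal.tendsto h).comp hlim).limsup_eq]
  refine limsup_le_limsup ?_
  filter_upwards [eventually_gt_atTop 0] with n hn
  obtain ⟨E, hE, hEC⟩ := hcard n
  obtain ⟨F, hF, hFcard⟩ := hE.exists_card_eq_spanNum
  have hpos : (0 : ℝ) < spanNum d f α ε n := by
    rw [← hFcard]
    exact_mod_cast hF.nonempty.card_pos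
  have hspan : (spanNum d f α ε n : ℝ) ≤ C * Real.exp (h * n) :=
    (Nat.cast_le.2 hE.spanNum_le).trans hEC
  have hC : 0 < C := pos_of_mul_pos_left (hpos.trans_le hspan) (Real.exp_nonneg _)
  refine EReal.coe_le_coe_iff.2 ?_
  calc Real.log (spanNum d f α ε n) / n
      ≤ Real.log (C * Real.exp (h * n)) / n := by gcongr
    _ = Real.log C / n + h := by
        rw [Real.log_mul hC.ne' (Real.exp_ne_zero _), Real.log_exp]
        field_simp

end Entropy

section HausdorffDimension

variable {X : Type*} {d : X → X → ℝ}

theorem ofReal_le_ediamD {U : Set X} {x y : X} (hx : x ∈ U) (hy : y ∈ U) :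
    ENNReal.ofReal (d x y) ≤ ediamD d U :=
  (le_iSup₂ (f := fun y (_ : y ∈ U) => ENNReal.ofReal (d x y)) y hy).trans <|
    le_iSup₂ (f := fun x (_ : x ∈ U) => ⨆ y ∈ U, ENNReal.ofReal (d x y)) x hx

theorem ediamD_empty : ediamD d ∅ = 0 := by simp [ediamD]

theorem hausPre_le_tsum {ι : Type*} [Countable ι] {s δ : ℝ} (hs : 0 < s) {E : Set X}
    (U : ι → Set X) (hE : E ⊆ ⋃ i, U i) (hU : ∀ i, ediamD d (U i) ≤ ENNReal.ofReal δ) :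
    hausPre d s δ E ≤ ∑' i, ediamD d (U i) ^ s := by
  obtain ⟨e, he⟩ := exists_injective_nat ι
  let V := Function.extend e U fun _ => ∅
  have hV : ∀ i, V (e i) = U i := he.extend_apply _ _
  have hV_empty : ∀ j ∉ range e, V j = ∅ := fun j hj => Function.extend_apply' _ _ j hj
  refine iInf_le_of_le V <| iInf₂_le_of_le ?_ (fun j => ?_) ?_
  · exact hE.trans (iUnion_subset fun i => (hV i).symm.subset.trans (subset_iUnion V (e i)))
  · by_cases hj : j ∈ range e
    · obtain ⟨i, rfl⟩ := hj
      exact (hV i).symm ▸ hU i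
    · simp only [hV_empty j hj, ediamD_empty, zero_le]
  · rw [← he.tsum_eq (f := fun j => ediamD d (V j) ^ s)]
    · simp only [hV, le_refl]
    · refine Function.support_subset_iff'.2 fun j hj => ?_
      rw [hV_empty j hj, ediamD_empty, ENNReal.zero_rpow_of_pos hs]

theorem hausPre_le_card_mul {s δ : ℝ} (hs : 0 < s) {E : Set X} (𝒰 : Finset (Set X))
    (hE : E ⊆ ⋃ U ∈ 𝒰, U) (h𝒰 : ∀ U ∈ 𝒰, ediamD d U ≤ ENNReal.ofReal δ) :
    hausPre d s δ E ≤ 𝒰.card * ENNReal.ofReal δ ^ s := by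
  refine (hausPre_le_tsum hs (fun U : 𝒰 => (U : Set X)) ?_ fun U => h𝒰 U U.2).trans ?_
  · simpa only [iUnion_subtype] using hE
  · calc ∑' U : 𝒰, ediamD d (U : Set X) ^ s ≤ ∑' _ : 𝒰, ENNReal.ofReal δ ^ s :=
          ENNReal.tsum_le_tsum fun U => ENNReal.rpow_le_rpow (h𝒰 U U.2) hs.le
      _ = 𝒰.card * ENNReal.ofReal δ ^ s := by simp

theorem hausPre_anti {s : ℝ} {E : Set X} : Antitone fun δ => hausPre d s δ E :=
  fun _ _ hδ => le_iInf fun U => le_iInf₂ fun hE hU => iInf_le_of_le U <|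
    iInf₂_le_of_le hE (fun i => (hU i).trans (ENNReal.ofReal_le_ofReal hδ)) le_rfl

theorem hausMeas_eq_zero_of_card_le {E : Set X} {C h s : ℝ} (hs : 0 < s) (hhs : h < s)
    (hcover : ∀ n : ℕ, ∃ 𝒰 : Finset (Set X), E ⊆ ⋃ U ∈ 𝒰, U ∧
      (∀ U ∈ 𝒰, ediamD d U ≤ ENNReal.ofReal (Real.exp (-(n : ℝ)))) ∧
      (𝒰.card : ℝ) ≤ C * Real.exp (h * n)) :
    hausMeas d s E = 0 := by
  refine nonpos_iff_eq_zero.1 (iSup₂_le fun δ hδ => ?_)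
  have hlim : Tendsto (fun n : ℕ => ENNReal.ofReal C * ENNReal.ofReal (Real.exp ((h - s) * n)))
      atTop (𝓝 0) :=
    tendsto_const_mul_ofReal_exp_mul ENNReal.ofReal_ne_top (sub_neg.2 hhs)
  refine ge_of_tendsto hlim ?_
  filter_upwards [eventually_exp_neg_natCast_lt hδ] with n hn
  obtain ⟨𝒰, hE, hdiam, hcard⟩ := hcover n
  calc hausPre d s δ E ≤ hausPre d s (Real.exp (-(n : ℝ))) E := hausPre_anti hn.le
    _ ≤ 𝒰.card * ENNReal.ofReal (Real.exp (-(n : ℝ))) ^ s := hausPre_le_card_mul hs 𝒰 hE hdiam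
    _ = ENNReal.ofReal 𝒰.card * ENNReal.ofReal (Real.exp (-(n : ℝ) * s)) := by
        rw [ENNReal.ofReal_natCast, ENNReal.ofReal_rpow_of_pos (Real.exp_pos _), ← Real.exp_mul]
    _ ≤ ENNReal.ofReal (C * Real.exp (h * n)) * ENNReal.ofReal (Real.exp (-(n : ℝ) * s)) := by
        gcongr
    _ = ENNReal.ofReal C * ENNReal.ofReal (Real.exp ((h - s) * n)) := by
        rw [ENNReal.ofReal_mul' (Real.exp_nonneg _), mul_assoc,
          ← ENNReal.ofReal_mul (Real.exp_nonneg _), ← Real.exp_add]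
        ring_nf

theorem hausDim_le_of_card_le {E : Set X} {C h : ℝ} (hh : 0 ≤ h)
    (hcover : ∀ n : ℕ, ∃ 𝒰 : Finset (Set X), E ⊆ ⋃ U ∈ 𝒰, U ∧
      (∀ U ∈ 𝒰, ediamD d U ≤ ENNReal.ofReal (Real.exp (-(n : ℝ)))) ∧
      (𝒰.card : ℝ) ≤ C * Real.exp (h * n)) :
    hausDim d E ≤ ENNReal.ofReal h := by
  refine le_of_forall_gt_imp_ge_of_dense fun b hb => ?_
  obtain ⟨s, hs, hsb⟩ := ENNReal.lt_iff_exists_nnreal_btwn.1 hb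
  have hhs : h < s := (ENNReal.ofReal_lt_coe_iff hh).1 hs
  exact (iInf₂_le s (hausMeas_eq_zero_of_card_le (hh.trans_lt hhs) hhs hcover)).trans hsb.le

theorem measure_le_mul_ediamD_rpow [MeasurableSpace X] {μ : Measure X} {C : ℝ≥0∞} (hC : C ≠ ∞)
    {s : ℝ} (hs : 0 < s)
    (hμ : ∀ (n : ℕ) (U : Set X), ediamD d U ≤ ENNReal.ofReal (Real.exp (-(n : ℝ))) →
      μ U ≤ C * ENNReal.ofReal (Real.exp (-s * n)))
    {U : Set X} (hU : ediamD d U ≤ 1) :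
    μ U ≤ C * ENNReal.ofReal (Real.exp s) * ediamD d U ^ s := by
  obtain hU₀ | hU₀ := eq_or_ne (ediamD d U) 0
  · have hμU : μ U ≤ 0 := ge_of_tendsto' (tendsto_const_mul_ofReal_exp_mul hC (neg_neg_of_pos hs))
      fun n => hμ n U (hU₀.trans_le zero_le)
    exact hμU.trans zero_le
  have hU_top : ediamD d U ≠ ∞ := ne_top_of_le_ne_top ENNReal.one_ne_top hU
  let r := (ediamD d U).toReal
  have hr : ediamD d U = ENNReal.ofReal r := (ENNReal.ofReal_toReal hU_top).symm
  have hr₀ : 0 < r := ENNReal.toReal_pos hU₀ hU_top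
  have hr₁ : r ≤ 1 := ENNReal.toReal_le_of_le_ofReal zero_le_one (by simpa using hU)
  let n := ⌊-Real.log r⌋₊
  have hn_le : (n : ℝ) ≤ -Real.log r :=
    Nat.floor_le (neg_nonneg.2 (Real.log_nonpos hr₀.le hr₁))
  have hn_lt : -Real.log r < n + 1 := Nat.lt_floor_add_one _
  have hscale : ediamD d U ≤ ENNReal.ofReal (Real.exp (-(n : ℝ))) := by
    rw [hr]
    refine ENNReal.ofReal_le_ofReal ((Real.log_le_iff_le_exp hr₀).1 ?_)
    linarith
  calc μ U ≤ C * ENNReal.ofReal (Real.exp (-s * n)) := hμ n U hscale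
    _ ≤ C * ENNReal.ofReal (Real.exp s * r ^ s) := by
        rw [Real.rpow_def_of_pos hr₀, ← Real.exp_add]
        gcongr
        nlinarith
    _ = C * ENNReal.ofReal (Real.exp s) * ediamD d U ^ s := by
        rw [hr, ENNReal.ofReal_mul (Real.exp_nonneg s), ENNReal.ofReal_rpow_of_pos hr₀, mul_assoc]

theorem measure_div_le_hausPre [MeasurableSpace X] {μ : Measure X} {C : ℝ≥0∞} {s δ : ℝ}
    (hμ : ∀ U, ediamD d U ≤ ENNReal.ofReal δ → μ U ≤ C * ediamD d U ^ s) (E : Set X) :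
    μ E / C ≤ hausPre d s δ E := by
  refine le_iInf fun U => le_iInf₂ fun hcover hU => ENNReal.div_le_of_le_mul' ?_
  calc μ E ≤ ∑' i, μ (U i) := (measure_mono hcover).trans (measure_iUnion_le U)
    _ ≤ ∑' i, C * ediamD d (U i) ^ s := ENNReal.tsum_le_tsum fun i => hμ _ (hU i)
    _ = C * ∑' i, ediamD d (U i) ^ s := ENNReal.tsum_mul_left

theorem ofReal_le_hausDim_of_measure_le [MeasurableSpace X] {μ : Measure X} {C : ℝ≥0∞}
    (hC : C ≠ ∞) {h : ℝ} {E : Set X} (hE : μ E ≠ 0)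
    (hμ : ∀ (n : ℕ) (U : Set X), ediamD d U ≤ ENNReal.ofReal (Real.exp (-(n : ℝ))) →
      μ U ≤ C * ENNReal.ofReal (Real.exp (-h * n))) :
    ENNReal.ofReal h ≤ hausDim d E := by
  refine le_iInf₂ fun s hs => ?_
  by_contra! hlt
  have hsh : (s : ℝ) < h := ENNReal.coe_lt_ofReal.1 hlt
  have hdiv : μ E / (C * ENNReal.ofReal (Real.exp h)) ≤ hausMeas d s E := by
    refine (measure_div_le_hausPre (δ := 1) (fun U hU => ?_) E).trans
      (le_iSup₂ (f := fun δ (_ : 0 < δ) => hausPre d s δ E) 1 one_pos)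
    have hU₁ : ediamD d U ≤ 1 := hU.trans_eq ENNReal.ofReal_one
    refine (measure_le_mul_ediamD_rpow hC (s.coe_nonneg.trans_lt hsh) hμ hU₁).trans ?_
    exact mul_le_mul_right (ENNReal.rpow_le_rpow_of_exponent_ge hU₁ hsh.le) _
  rw [hs, nonpos_iff_eq_zero, ENNReal.div_eq_zero_iff] at hdiv
  exact hdiv.elim hE (ENNReal.mul_ne_top hC ENNReal.ofReal_ne_top)

end HausdorffDimension

section Cylinders

variable (A : Type*) [Nonempty A]

theorem exists_finset_cylinder_cover [Fintype A] (n : ℕ) :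
    ∃ E : Finset (ℕ → A), E.card ≤ Fintype.card A ^ n ∧ ∀ x, ∃ y ∈ E, x ∈ cylinder y n := by
  let extension : (Fin n → A) → ℕ → A := fun w =>
    Function.extend Fin.val w fun _ => Classical.arbitrary A
  refine ⟨Finset.univ.image extension, ?_, fun x => ⟨extension fun i => x i, by simp, ?_⟩⟩
  · exact Finset.card_image_le.trans_eq (by simp)
  · exact fun i hi => (Fin.val_injective.extend_apply (fun i : Fin n => x i) _ ⟨i, hi⟩).symm

variable [MeasurableSpace A]

/-- The Bernoulli measure on `A^ℕ` under which the coordinates are independent and uniformly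
distributed; it spreads mass evenly over the cylinders of each length. -/
def uniformBernoulli : Measure (ℕ → A) :=
  Measure.infinitePi fun _ => uniformOn univ

instance [Finite A] : IsProbabilityMeasure (uniformBernoulli A) := by
  unfold uniformBernoulli
  infer_instance

variable {A} in
theorem uniformBernoulli_cylinder [Fintype A] [MeasurableSingletonClass A] (x : ℕ → A)
    (n : ℕ) :
    uniformBernoulli A (cylinder x n) =
      ENNReal.ofReal (Real.exp (-(Real.log (Fintype.card A) * n))) := by
  have hcard : (0 : ℝ) < Fintype.card A := by exact_mod_cast Fintype.card_pos
  have hpi : cylinder x n = Set.pi (Finset.range n : Set ℕ) fun i => {x i} := by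
    rw [cylinder_eq_pi]
  rw [hpi, uniformBernoulli, Measure.infinitePi_pi _ fun i _ => measurableSet_singleton _]
  simp only [uniformOn_univ, Measure.count_singleton, Finset.prod_const, Finset.card_range]
  rw [Real.exp_neg, ← pow_eq_exp_log_mul hcard, ENNReal.ofReal_inv_of_pos (pow_pos hcard n),
    ENNReal.ofReal_pow hcard.le, ENNReal.ofReal_natCast, one_div, ENNReal.inv_pow]

end Cylinders

section FullShift

variable {k : ℕ}

theorem shiftDist_of_ne {x y : ℕ → Fin k} (h : x ≠ y) :
    shiftDist x y = Real.exp (-(firstDiff x y : ℝ)) := by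
  have hsInf : sInf {n | x n ≠ y n} = firstDiff x y :=
    le_antisymm (Nat.sInf_le (apply_firstDiff_ne h)) <|
      le_csInf ⟨_, apply_firstDiff_ne h⟩ fun _ hn =>
        not_lt.1 fun hlt => hn (apply_eq_of_lt_firstDiff hlt)
  rw [shiftDist, if_neg h, hsInf]

theorem shiftDist_le_exp_neg_iff {x y : ℕ → Fin k} {n : ℕ} :
    shiftDist x y ≤ Real.exp (-(n : ℝ)) ↔ y ∈ cylinder x n := by
  obtain rfl | h := eq_or_ne x y
  · simp [shiftDist, Real.exp_nonneg]
  · rw [shiftDist_of_ne h, Real.exp_le_exp, neg_le_neg_iff, Nat.cast_le, mem_cylinder_comm,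
      mem_cylinder_iff_le_firstDiff h]

theorem ediamD_cylinder_le (x : ℕ → Fin k) (n : ℕ) :
    ediamD shiftDist (cylinder x n) ≤ ENNReal.ofReal (Real.exp (-(n : ℝ))) :=
  iSup₂_le fun _ hy => iSup₂_le fun _ hz => ENNReal.ofReal_le_ofReal <|
    shiftDist_le_exp_neg_iff.2 fun j hj => (hz j hj).trans (hy j hj).symm

theorem iterate_shiftMap_apply (i j : ℕ) (x : ℕ → Fin k) :
    (shiftMap k)^[i] x j = x (j + i) := by
  induction i generalizing j with
  | zero => rfl
  | succ i ih => rw [Function.iterate_succ_apply', shiftMap, ih, Nat.add_right_comm, Nat.add_assoc]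

theorem iterate_shiftMap_mem_cylinder_iff {x y : ℕ → Fin k} {i l : ℕ} :
    (shiftMap k)^[i] y ∈ cylinder ((shiftMap k)^[i] x) l ↔ ∀ j < l, y (j + i) = x (j + i) := by
  simp only [mem_cylinder_iff, iterate_shiftMap_apply]

theorem cylinder_subset_bowenBall {α ε : ℝ} (hα : 0 ≤ α) {c : ℕ} (hc : Real.exp (-(c : ℝ)) < ε)
    (n : ℕ) (x : ℕ → Fin k) :
    cylinder x (n + ⌈α * n⌉₊ + c) ⊆ bowenBall shiftDist (shiftMap k) α n x ε := by
  intro y hy i hi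
  have hdist : shiftDist ((shiftMap k)^[i] x) ((shiftMap k)^[i] y) ≤
      Real.exp (-((⌈α * n⌉₊ + c : ℕ) : ℝ)) :=
    shiftDist_le_exp_neg_iff.2 <| iterate_shiftMap_mem_cylinder_iff.2 fun j hj => hy _ (by omega)
  have hαi : α * i ≤ ⌈α * n⌉₊ :=
    (mul_le_mul_of_nonneg_left (Nat.cast_le.2 hi.le) hα).trans (Nat.le_ceil _)
  calc Real.exp (α * i) * shiftDist ((shiftMap k)^[i] x) ((shiftMap k)^[i] y)
      ≤ Real.exp (α * i) * Real.exp (-((⌈α * n⌉₊ + c : ℕ) : ℝ)) := by gcongr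
    _ ≤ Real.exp (-(c : ℝ)) := by
        rw [← Real.exp_add, Real.exp_le_exp]
        push_cast
        linarith
    _ < ε := hc

theorem apply_eq_of_mem_bowenBall {α : ℝ} (hα : 0 ≤ α) {n i j : ℕ} {x y : ℕ → Fin k}
    (hy : y ∈ bowenBall shiftDist (shiftMap k) α n x (Real.exp (-1))) (hi : i < n)
    (hj : j ≤ ⌊α * i⌋₊) : y (j + i) = x (j + i) := by
  have hfloor : (⌊α * i⌋₊ : ℝ) ≤ α * i := Nat.floor_le (by positivity)
  refine iterate_shiftMap_mem_cylinder_iff.1 (shiftDist_le_exp_neg_iff.1 ?_) j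
    (Nat.lt_succ_of_le hj)
  calc shiftDist ((shiftMap k)^[i] x) ((shiftMap k)^[i] y)
      ≤ Real.exp (-1) / Real.exp (α * i) := (le_div_iff₀' (Real.exp_pos _)).2 (hy i hi).le
    _ ≤ Real.exp (-((⌊α * i⌋₊ + 1 : ℕ) : ℝ)) := by
        rw [← Real.exp_sub, Real.exp_le_exp]
        push_cast
        linarith

theorem bowenBall_subset_cylinder {α : ℝ} (hα : 0 ≤ α) (n : ℕ) (x : ℕ → Fin k) :
    bowenBall shiftDist (shiftMap k) α (n + 1) x (Real.exp (-1)) ⊆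
      cylinder x (n + ⌊α * n⌋₊ + 1) := by
  intro y hy j hj
  obtain hjn | ⟨l, rfl⟩ := (lt_or_ge j n).imp_right Nat.exists_eq_add_of_le'
  · simpa using apply_eq_of_mem_bowenBall hα hy (hjn.trans n.lt_succ_self) (Nat.zero_le _)
  · exact apply_eq_of_mem_bowenBall hα hy n.lt_succ_self (by omega)

variable [NeZero k]

theorem uniformBernoulli_bowenBall_le {α : ℝ} (hα : 0 ≤ α) (n : ℕ) (x : ℕ → Fin k) :
    uniformBernoulli (Fin k) (bowenBall shiftDist (shiftMap k) α n x (Real.exp (-1))) ≤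
      ENNReal.ofReal (Real.exp ((1 + α) * Real.log k)) *
        ENNReal.ofReal (Real.exp (-((1 + α) * Real.log k) * n)) := by
  have hlog : 0 ≤ Real.log k := Real.log_natCast_nonneg k
  rw [← ENNReal.ofReal_mul (Real.exp_nonneg _), ← Real.exp_add]
  obtain _ | n := n
  · refine prob_le_one.trans (ENNReal.one_le_ofReal.2 (Real.one_le_exp ?_))
    simp only [CharP.cast_eq_zero, mul_zero, add_zero]
    positivity
  refine (measure_mono (bowenBall_subset_cylinder hα n x)).trans ?_
  rw [uniformBernoulli_cylinder, Fintype.card_fin]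
  refine ENNReal.ofReal_le_ofReal (Real.exp_le_exp.2 ?_)
  have hfloor : (1 + α) * n ≤ ((n + ⌊α * n⌋₊ + 1 : ℕ) : ℝ) := by
    push_cast
    linarith [Nat.lt_floor_add_one (α * n)]
  push_cast at hfloor ⊢
  linarith [mul_le_mul_of_nonneg_left hfloor hlog]

theorem exists_isSpanning_shiftMap {α ε : ℝ} (hα : 0 ≤ α) {c : ℕ}
    (hc : Real.exp (-(c : ℝ)) < ε) (n : ℕ) :
    ∃ E, IsSpanning (shiftDist (k := k)) (shiftMap k) α ε n E ∧
      (E.card : ℝ) ≤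
        Real.exp ((c + 1) * Real.log k) * Real.exp ((1 + α) * Real.log k * n) := by
  obtain ⟨E, hcard, hE⟩ := exists_finset_cylinder_cover (Fin k) (n + ⌈α * n⌉₊ + c)
  refine ⟨E, fun x => ?_, ?_⟩
  · obtain ⟨y, hy, hxy⟩ := hE x
    exact ⟨y, hy, cylinder_subset_bowenBall hα hc n y hxy⟩
  have hk : (0 : ℝ) < k := Nat.cast_pos.2 (NeZero.pos k)
  have hceil : (⌈α * n⌉₊ : ℝ) ≤ α * n + 1 := (Nat.ceil_lt_add_one (by positivity)).le
  calc (E.card : ℝ) ≤ (k : ℝ) ^ (n + ⌈α * n⌉₊ + c) := by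
        simpa using (Nat.cast_le (α := ℝ)).2 hcard
    _ = Real.exp (Real.log k * (n + ⌈α * n⌉₊ + c : ℕ)) := pow_eq_exp_log_mul hk _
    _ ≤ Real.exp (Real.log k * ((1 + α) * n + (c + 1))) := by
        gcongr
        push_cast
        linarith
    _ = Real.exp ((c + 1) * Real.log k) * Real.exp ((1 + α) * Real.log k * n) := by
        rw [← Real.exp_add]
        ring_nf

theorem uniformBernoulli_le_of_ediamD_le (n : ℕ) (U : Set (ℕ → Fin k))
    (hU : ediamD shiftDist U ≤ ENNReal.ofReal (Real.exp (-(n : ℝ)))) :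
    uniformBernoulli (Fin k) U ≤ 1 * ENNReal.ofReal (Real.exp (-Real.log k * n)) := by
  obtain rfl | ⟨x, hx⟩ := U.eq_empty_or_nonempty
  · simp
  have hsub : U ⊆ cylinder x n := fun y hy => shiftDist_le_exp_neg_iff.1 <|
    (ENNReal.ofReal_le_ofReal_iff (Real.exp_nonneg _)).1 ((ofReal_le_ediamD hx hy).trans hU)
  refine (measure_mono hsub).trans_eq ?_
  rw [uniformBernoulli_cylinder, Fintype.card_fin, one_mul, neg_mul]

variable (k)

theorem le_entB_shiftMap {α : ℝ} (hα : 0 ≤ α) :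
    (((1 + α) * Real.log k : ℝ) : EReal) ≤ entB (shiftDist (k := k)) (shiftMap k) α univ :=
  le_iSup₂_of_le (Real.exp (-1)) (Real.exp_pos _) <|
    le_Ecrit_of_measure_bowenBall_le ENNReal.ofReal_ne_top
      (by simp) (uniformBernoulli_bowenBall_le hα)

theorem entB_shiftMap_le_htopSpan {α : ℝ} (hα : 0 ≤ α) :
    entB (shiftDist (k := k)) (shiftMap k) α univ ≤ htopSpan shiftDist (shiftMap k) α := by
  refine iSup₂_mono fun ε hε => Ecrit_univ_le_htopSpanE fun n => ?_
  obtain ⟨c, hc⟩ := (eventually_exp_neg_natCast_lt hε).exists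
  exact (exists_isSpanning_shiftMap hα hc n).imp fun _ => And.left

theorem htopSpan_shiftMap_le {α : ℝ} (hα : 0 ≤ α) :
    htopSpan (shiftDist (k := k)) (shiftMap k) α ≤ (((1 + α) * Real.log k : ℝ) : EReal) := by
  refine iSup₂_le fun ε hε => ?_
  obtain ⟨c, hc⟩ := (eventually_exp_neg_natCast_lt hε).exists
  exact htopSpanE_le_of_card_le (exists_isSpanning_shiftMap hα hc)

theorem log_le_hausDim_shift :
    ENNReal.ofReal (Real.log k) ≤ hausDim (shiftDist (k := k)) univ :=
  ofReal_le_hausDim_of_measure_le ENNReal.one_ne_top (by simp)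
    uniformBernoulli_le_of_ediamD_le

theorem hausDim_shift_le_log :
    hausDim (shiftDist (k := k)) univ ≤ ENNReal.ofReal (Real.log k) := by
  refine hausDim_le_of_card_le (C := 1) (Real.log_natCast_nonneg k) fun n => ?_
  obtain ⟨E, hcard, hE⟩ := exists_finset_cylinder_cover (Fin k) n
  refine ⟨E.image (cylinder · n), fun x _ => ?_, ?_, ?_⟩
  · simpa using hE x
  · simp only [Finset.forall_mem_image]
    exact fun y _ => ediamD_cylinder_le y n
  · rw [one_mul, ← pow_eq_exp_log_mul (Nat.cast_pos.2 (NeZero.pos k))]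
    exact_mod_cast Finset.card_image_le.trans (by simpa using hcard)

end FullShift

end AlphaBS

/-- for the full one-sided shift on `k` symbols,
`h_top^{α,B}(σ,Σ_k^+) = h_top^α(σ,Σ_k^+) = (1+α) log k` and `dim_H(Σ_k^+,d) = log k`. -/
theorem stmt16 (k : ℕ) (hk : 0 < k) (α : ℝ) (hα : 0 ≤ α) :
    entB (shiftDist (k := k)) (shiftMap k) α (Set.univ : Set (ℕ → Fin k)) =
        (((1 + α) * Real.log k : ℝ) : EReal) ∧
    htopSpan (shiftDist (k := k)) (shiftMap k) α = (((1 + α) * Real.log k : ℝ) : EReal) ∧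
    hausDim (shiftDist (k := k)) (Set.univ : Set (ℕ → Fin k)) =
        ENNReal.ofReal (Real.log k) := by
  have : NeZero k := ⟨hk.ne'⟩
  have hlower := le_entB_shiftMap k hα
  have hcompare := entB_shiftMap_le_htopSpan k hα
  have hupper := htopSpan_shiftMap_le k hα
  exact ⟨(hcompare.trans hupper).antisymm hlower, hupper.antisymm (hlower.trans hcompare),
    (hausDim_shift_le_log k).antisymm (log_le_hausDim_shift k)⟩

end
end
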